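/- arXiv:1712.03441 — 2 statements merged into one kernel-verified Lean document; each statement's English description precedes it below -/
import Mathlib

section
/- Let h be a Lie algebroid over A with anchor ρ, let ξ, η ∈ h satisfy ρ(ξ) = 0 and ρ(η) = 0, and suppose a, b ∈ A are such that a·ξ = b·ξ and a·η = b·η. Then for every v ∈ h one has (b·ρ(v)(a) − a·ρ(v)(b))·[ξ, η] = 0. (This is the abstract form of the obstruction computed in the paper's Example on the failure of fibrant replacements.) -/
/-- A Lie algebroid over a commutative `k`-algebra `A` (the ungraded, degree-zero instance of
the dg-Lie algebroids of the paper): an `A`-module `g` equipped with a `k`-bilinear Lie bracket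
and an `A`-linear anchor map `ρ : g → Der_k(A)` which is a morphism of `k`-Lie algebras and
satisfies the Leibniz rule. -/
structure IsLieAlgebroid (k : Type*) [Field k] {A : Type*} [CommRing A] [Algebra k A]
    {g : Type*} [LieRing g] [LieAlgebra k g] [Module A g] [IsScalarTower k A g]
    (ρ : g →ₗ[A] Derivation k A A) : Prop where
  map_lie : ∀ X Y : g, ρ ⁅X, Y⁆ = ⁅ρ X, ρ Y⁆
  leibniz : ∀ (a : A) (X Y : g), ⁅X, a • Y⁆ = a • ⁅X, Y⁆ + ρ X a • Y

/-- Let `h` be a Lie algebroid over `A` with anchor `ρ`, let `ξ, η ∈ h`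
satisfy `ρ ξ = 0` and `ρ η = 0`, and suppose `a, b ∈ A` are such that `a·ξ = b·ξ` and
`a·η = b·η`.  Then for every `v ∈ h` one has `(b·ρ(v)(a) − a·ρ(v)(b))·⁅ξ, η⁆ = 0`. -/
theorem lie_algebroid_obstruction
    (k : Type*) [Field k] [CharZero k]
    (A : Type*) [CommRing A] [Algebra k A]
    (h : Type*) [LieRing h] [LieAlgebra k h] [Module A h] [IsScalarTower k A h]
    (ρ : h →ₗ[A] Derivation k A A) (H : IsLieAlgebroid k ρ)
    (ξ η : h) (hξ : ρ ξ = 0) (hη : ρ η = 0)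
    (a b : A) (hab₁ : a • ξ = b • ξ) (hab₂ : a • η = b • η)
    (v : h) :
    (b * ρ v a - a * ρ v b) • ⁅ξ, η⁆ = 0 := by
  have hc1 : (a - b) • ξ = 0 := by rw [sub_smul, hab₁, sub_self]
  have hc2 : (a - b) • η = 0 := by rw [sub_smul, hab₂, sub_self]
  have h1 := H.leibniz (a - b) v ξ
  rw [hc1, lie_zero] at h1
  have h2 : ρ v (a - b) • ξ = -((a - b) • ⁅v, ξ⁆) := (neg_eq_of_add_eq_zero_right h1.symm).symm
  have hr : ρ ⁅v, ξ⁆ = 0 := by rw [H.map_lie, hξ, lie_zero]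
  have h3 := H.leibniz (a - b) ⁅v, ξ⁆ η
  rw [hc2, lie_zero, hr, Derivation.zero_apply, zero_smul, add_zero] at h3
  have h4 := H.leibniz (ρ v (a - b)) η ξ
  rw [h2, hη, Derivation.zero_apply, zero_smul, add_zero, lie_neg, H.leibniz, hη,
    Derivation.zero_apply, zero_smul, add_zero, ← lie_skew η ⁅v, ξ⁆, ← lie_skew η ξ,
    smul_neg, smul_neg, neg_neg, ← h3] at h4
  have h5 : ρ v (a - b) • ⁅ξ, η⁆ = 0 := by
    rw [← neg_eq_zero]; first | exact h4.symm | simpa using h4.symm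
  have h6 := H.leibniz (a - b) ξ η
  rw [hc2, lie_zero, hξ, Derivation.zero_apply, zero_smul, add_zero] at h6
  have e : b * ρ v a - a * ρ v b = b * ρ v (a - b) - ρ v b * (a - b) := by
    rw [map_sub]; ring
  rw [e, sub_smul, mul_smul, mul_smul, h5, ← h6, smul_zero, smul_zero, sub_zero]
end

section
/- Let k be a field of characteristic zero, A = k[x, y] the polynomial ring in two variables, B = k[t], and φ : A → B the k-algebra map with φ(x) = φ(y) = t. Let g be the free Lie algebra over B on two generators e₁, e₂, regarded as an A-module via φ. Then: (i) the element x·[e₁, e₂] is nonzero in g; and (ii) for every Lie algebroid h over A for which there exists v ∈ h with ρ(v) = ∂/∂y, and for every map ι : g → h which is A-linear, preserves Lie brackets, and satisfies ρ_h ∘ ι = 0, one has ι(x·[e₁, e₂]) = 0. In particular, ι is never injective. (This is the paper's Example showing that g admits no quasi-isomorphism into a Lie algebroid with surjective anchor.) -/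
section Helpers

attribute [local instance] LieRing.ofAssociativeRing

/-- A nonzero multiple of the bracket of the two generators is nonzero: map to 2x2 matrices. -/
theorem X_smul_lie_ne_zero (k : Type*) [Field k] :
    (Polynomial.X : Polynomial k) • ⁅FreeLieAlgebra.of (Polynomial k) (0 : Fin 2),
      FreeLieAlgebra.of (Polynomial k) (1 : Fin 2)⁆ ≠ 0 := by
  intro h0
  let f : Fin 2 → Matrix (Fin 2) (Fin 2) (Polynomial k) :=
    ![Matrix.of ![![0, 1], ![0, 0]], Matrix.of ![![0, 0], ![1, 0]]]
  have h1 := congrArg (FreeLieAlgebra.lift (Polynomial k) f) h0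
  rw [_root_.map_smul, LieHom.map_lie, FreeLieAlgebra.lift_of_apply,
    FreeLieAlgebra.lift_of_apply, _root_.map_zero] at h1
  have h2 := congrFun (congrFun h1 0) 0
  simp [f, Ring.lie_def] at h2

end Helpers

/-- Let `A = k[x, y]`, `B = k[t]` and `φ : A → B` the `k`-algebra map with
`φ(x) = φ(y) = t`.  Let `g` be the free Lie algebra over `B` on two generators `e₁, e₂`,
regarded as an `A`-module via `φ`.  Then: (i) the element `x·⁅e₁, e₂⁆ = φ(x) • ⁅e₁, e₂⁆` is
nonzero in `g`; and (ii) for every Lie algebroid `h` over `A` admitting `v` with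
`ρ(v) = ∂/∂y`, and every additive map `ι : g → h` which is `A`-linear (with respect to the
`A`-action on `g` through `φ`), preserves Lie brackets and satisfies `ρ_h ∘ ι = 0`, one has
`ι(x·⁅e₁, e₂⁆) = 0`; in particular `ι` is never injective. -/
theorem no_transitive_resolution
    (k : Type*) [Field k] [CharZero k]
    -- `A = k[x,y]`, `B = k[t]`, `φ : A → B` with `φ x = φ y = t`
    (φ : MvPolynomial (Fin 2) k →ₐ[k] Polynomial k)
    (hφ : φ = MvPolynomial.aeval fun _ : Fin 2 => (Polynomial.X : Polynomial k))
    -- the two generators of the free Lie algebra `g` over `B`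
    (e₁ e₂ : FreeLieAlgebra (Polynomial k) (Fin 2))
    (he₁ : e₁ = FreeLieAlgebra.of (Polynomial k) 0)
    (he₂ : e₂ = FreeLieAlgebra.of (Polynomial k) 1)
    -- a Lie algebroid `h` over `A` whose anchor hits `∂/∂y`
    (h : Type*) [LieRing h] [LieAlgebra k h]
    [Module (MvPolynomial (Fin 2) k) h] [IsScalarTower k (MvPolynomial (Fin 2) k) h]
    (ρ : h →ₗ[MvPolynomial (Fin 2) k]
      Derivation k (MvPolynomial (Fin 2) k) (MvPolynomial (Fin 2) k))
    (Hh : IsLieAlgebroid k ρ)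
    (v : h) (hv : ρ v = MvPolynomial.pderiv 1)
    -- `ι : g → h` additive, `A`-linear over `φ`, bracket-preserving, with `ρ_h ∘ ι = 0`
    (ι : FreeLieAlgebra (Polynomial k) (Fin 2) →+ h)
    (hA : ∀ (a : MvPolynomial (Fin 2) k) (x : FreeLieAlgebra (Polynomial k) (Fin 2)),
      ι (φ a • x) = a • ι x)
    (hbr : ∀ x y : FreeLieAlgebra (Polynomial k) (Fin 2), ι ⁅x, y⁆ = ⁅ι x, ι y⁆)
    (hanchor : ∀ x : FreeLieAlgebra (Polynomial k) (Fin 2), ρ (ι x) = 0) :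
    -- (i) `x·⁅e₁,e₂⁆ ≠ 0` in `g`
    φ (MvPolynomial.X 0) • ⁅e₁, e₂⁆ ≠ 0 ∧
    -- (ii) `ι (x·⁅e₁,e₂⁆) = 0`
    ι (φ (MvPolynomial.X 0) • ⁅e₁, e₂⁆) = 0 ∧
    -- in particular, `ι` is not injective
    ¬ Function.Injective ι := by
  have hne : φ (MvPolynomial.X 0) • ⁅e₁, e₂⁆ ≠ 0 := by
    subst hφ he₁ he₂
    simpa using X_smul_lie_ne_zero k
  let a : MvPolynomial (Fin 2) k := MvPolynomial.X 1 - MvPolynomial.X 0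
  have hφa : φ a = 0 := by subst hφ; simp [a]
  have ha : ∀ x, a • ι x = 0 := fun x => by rw [← hA, hφa, zero_smul, map_zero]
  have hda : ρ v a = 1 := by
    rw [hv]; simp [a, MvPolynomial.pderiv_X]
  -- `ι x = - a • ⁅v, ι x⁆`
  have hι : ∀ x, a • ⁅v, ι x⁆ + ι x = 0 := fun x => by
    have := Hh.leibniz a v (ι x)
    rw [ha, lie_zero, hda, one_smul] at this
    exact this.symm
  have hρ : ∀ x, ρ ⁅v, ι x⁆ = 0 := fun x => by
    rw [Hh.map_lie, hanchor]
    ext i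
    simp [Derivation.commutator_apply]
  have hz : ι ⁅e₁, e₂⁆ = 0 := by
    rw [hbr]
    have h2 : ι e₂ = - (a • ⁅v, ι e₂⁆) := eq_neg_of_add_eq_zero_right (hι e₂)
    have h3 := Hh.leibniz a (ι e₁) ⁅v, ι e₂⁆
    have h4 := Hh.leibniz a ⁅v, ι e₂⁆ (ι e₁)
    rw [ha, lie_zero, hρ, Derivation.zero_apply, zero_smul, add_zero] at h4
    rw [hanchor, Derivation.zero_apply, zero_smul, add_zero, ← lie_skew (ι e₁) ⁅v, ι e₂⁆, smul_neg, ← h4,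
      neg_zero] at h3
    rw [h2, lie_neg, h3, neg_zero]
  have hz' : ι (φ (MvPolynomial.X 0) • ⁅e₁, e₂⁆) = 0 := by rw [hA, hz, smul_zero]
  exact ⟨hne, hz', fun hinj => hne (hinj (hz'.trans (map_zero ι).symm))⟩
end
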